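/- Let {X(λ)} be a *-resolution of the identity with sup‖X(λ)‖ = 1 and set Φ(λ) = (X(λ)*X(λ))^{1/2}. Then sup_λ ‖Φ(λ)‖ = 1, Φ(λ) ≤ Φ(μ) for λ < μ, Φ(λ)ξ → 0 strongly as λ → −∞, Φ(λ)ξ → ξ strongly as λ → +∞, and Φ is strongly right-continuous. -/

import Mathlib

open Filter Topology

/-!
The operator `Φ(λ)` is the absolute value `|X(λ)|`. From `X(λ) = X(λ)X(μ)` one gets
`|X(λ)|² ≤ ‖X(λ)‖² |X(μ)|²`, and operator monotonicity of the square root turns this into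
`|X(λ)| ≤ ‖X(λ)‖ |X(μ)|`. The limits at `+∞` and from the right hold because multiplication is
jointly strongly continuous on bounded sets, so that every polynomial, and by the Weierstrass
theorem every continuous function of a self-adjoint operator, is strongly continuous on bounded
sets; apply this to the square root of `X(λ)*X(λ)`.

When `sup ‖X(λ)‖ = 1`, right-continuity makes each `X(λ)` a contractive idempotent, hence an
orthogonal projection, and `Φ = X`. For an arbitrary bound `M = sup ‖X(λ)‖` the argument above
gives `Φ(λ) ≤ M Φ(μ)`.
-/

section StrongConvergence

variable {ι 𝕜 E F : Type*} [NontriviallyNormedField 𝕜] [NormedAddCommGroup E] [NormedSpace 𝕜 E]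
  [NormedAddCommGroup F] [NormedSpace 𝕜 F] {f : Filter ι} {C : ℝ}

theorem tendsto_clm_apply_of_norm_le {T : ι → E →L[𝕜] F} {T₀ : E →L[𝕜] F}
    (hC : ∀ i, ‖T i‖ ≤ C) (hT : ∀ y, Tendsto (fun i => T i y) f (𝓝 (T₀ y)))
    {y : ι → E} {y₀ : E} (hy : Tendsto y f (𝓝 y₀)) :
    Tendsto (fun i => T i (y i)) f (𝓝 (T₀ y₀)) := by
  have hdiff : Tendsto (fun i => T i (y i - y₀)) f (𝓝 0) := by
    refine squeeze_zero_norm (fun i => (T i).le_of_opNorm_le (hC i) _) ?_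
    simpa only [mul_zero] using (tendsto_iff_norm_sub_tendsto_zero.1 hy).const_mul C
  simpa only [map_sub, sub_add_cancel, zero_add] using hdiff.add (hT y₀)

theorem tendsto_clm_pow_apply_of_norm_le {T : ι → E →L[𝕜] E} {T₀ : E →L[𝕜] E}
    (hC : ∀ i, ‖T i‖ ≤ C) (hT : ∀ y, Tendsto (fun i => T i y) f (𝓝 (T₀ y))) (n : ℕ) (y : E) :
    Tendsto (fun i => (T i ^ n) y) f (𝓝 ((T₀ ^ n) y)) := by
  induction n with
  | zero => simpa only [pow_zero] using tendsto_const_nhds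
  | succ n ih =>
    simp only [pow_succ', mul_apply_eq_comp]
    exact tendsto_clm_apply_of_norm_le hC hT ih

end StrongConvergence

theorem tendsto_aeval_clm_apply_of_norm_le {ι E : Type*} [NormedAddCommGroup E] [NormedSpace ℂ E]
    {f : Filter ι} {C : ℝ} {T : ι → E →L[ℂ] E} {T₀ : E →L[ℂ] E} (hC : ∀ i, ‖T i‖ ≤ C)
    (hT : ∀ y, Tendsto (fun i => T i y) f (𝓝 (T₀ y))) (p : Polynomial ℝ) (y : E) :
    Tendsto (fun i => Polynomial.aeval (T i) p y) f (𝓝 (Polynomial.aeval T₀ p y)) := by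
  simp only [Polynomial.aeval_eq_sum_range, sum_apply, smul_apply]
  exact tendsto_finsetSum _ fun n _ =>
    (tendsto_clm_pow_apply_of_norm_le hC hT n y).const_smul (p.coeff n)

theorem norm_aeval_sub_cfc_le {𝕜 A : Type*} {P : A → Prop} [RCLike 𝕜] [NormedRing A] [StarRing A]
    [NormedAlgebra 𝕜 A] [IsometricContinuousFunctionalCalculus 𝕜 A P] {a : A} (ha : P a)
    {g : 𝕜 → 𝕜} (hg : ContinuousOn g (spectrum 𝕜 a)) (p : Polynomial 𝕜) {ε : ℝ} (hε : 0 ≤ ε)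
    (hpg : ∀ x ∈ spectrum 𝕜 a, ‖p.eval x - g x‖ ≤ ε) :
    ‖Polynomial.aeval a p - cfc g a‖ ≤ ε := by
  rw [← cfc_polynomial p a ha, ← cfc_sub p.eval g a]
  exact norm_cfc_le hε hpg

theorem cfcAbs_mul_le_norm_smul_cfcAbs {A : Type*} [NonUnitalCStarAlgebra A] [PartialOrder A]
    [StarOrderedRing A] (a b : A) : CFC.abs (a * b) ≤ ‖a‖ • CFC.abs b := by
  have hsq : star (a * b) * (a * b) ≤ star (‖a‖ • b) * (‖a‖ • b) :=
    calc star (a * b) * (a * b) = star b * (star a * a) * b := by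
          simp only [star_mul, mul_assoc]
      _ ≤ ‖star a * a‖ • (star b * b) := CStarAlgebra.star_left_conjugate_le_norm_smul
      _ = star (‖a‖ • b) * (‖a‖ • b) := by
          simp only [CStarRing.norm_star_mul_self, star_smul, star_trivial, smul_mul_smul_comm]
  calc CFC.abs (a * b) ≤ CFC.abs (‖a‖ • b) := CFC.sqrt_le_sqrt _ _ hsq
    _ = ‖a‖ • CFC.abs b := by rw [CFC.abs_smul, norm_norm]

section Hilbert

variable {ι H : Type*} [NormedAddCommGroup H] [InnerProductSpace ℂ H] [CompleteSpace H]
  {f : Filter ι} {C : ℝ}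

theorem norm_cfcAbs_apply (T : H →L[ℂ] H) (ξ : H) : ‖CFC.abs T ξ‖ = ‖T ξ‖ := by
  have hsq : ContinuousLinearMap.adjoint (CFC.abs T) ∘L CFC.abs T =
      ContinuousLinearMap.adjoint T ∘L T := by
    rw [(CFC.abs_nonneg T).isSelfAdjoint.adjoint_eq]
    exact CFC.abs_mul_abs T
  rw [ContinuousLinearMap.apply_norm_eq_sqrt_inner_adjoint_left, hsq,
    ← ContinuousLinearMap.apply_norm_eq_sqrt_inner_adjoint_left]

theorem tendsto_cfc_apply_of_norm_le {A : ι → H →L[ℂ] H} {B : H →L[ℂ] H}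
    (hA : ∀ i, IsSelfAdjoint (A i)) (hB : IsSelfAdjoint B) (hC : ∀ i, ‖A i‖ ≤ C)
    (hAB : ∀ ξ, Tendsto (fun i => A i ξ) f (𝓝 (B ξ))) {g : ℝ → ℝ} (hg : Continuous g) (ξ : H) :
    Tendsto (fun i => cfc g (A i) ξ) f (𝓝 (cfc g B ξ)) := by
  set R := max C ‖B‖
  rw [Metric.tendsto_nhds]
  intro ε hε
  obtain ⟨δ, hδ, hδξ⟩ := exists_pos_mul_lt (show 0 < ε / 3 by positivity) ‖ξ‖
  obtain ⟨p, hp⟩ := exists_polynomial_near_of_continuousOn (-R) R g hg.continuousOn δ hδ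
  have hpoly : ∀ S : H →L[ℂ] H, IsSelfAdjoint S → ‖S‖ ≤ R →
      dist (Polynomial.aeval S p ξ) (cfc g S ξ) < ε / 3 := by
    intro S hS hSR
    have hpS : ‖Polynomial.aeval S p - cfc g S‖ ≤ δ :=
      norm_aeval_sub_cfc_le hS hg.continuousOn p hδ.le fun x hx =>
        have hxS := IsometricContinuousFunctionalCalculus.norm_spectrum_le S hx hS
        (hp x (abs_le.1 (hxS.trans hSR))).le
    rw [dist_eq_norm, ← sub_apply]
    exact (ContinuousLinearMap.le_of_opNorm_le _ hpS ξ).trans_lt (mul_comm δ ‖ξ‖ ▸ hδξ)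
  filter_upwards [Metric.tendsto_nhds.1 (tendsto_aeval_clm_apply_of_norm_le hC hAB p ξ) (ε / 3)
    (by positivity)] with i hi
  calc dist (cfc g (A i) ξ) (cfc g B ξ)
      ≤ dist (cfc g (A i) ξ) (Polynomial.aeval (A i) p ξ)
        + dist (Polynomial.aeval (A i) p ξ) (Polynomial.aeval B p ξ)
        + dist (Polynomial.aeval B p ξ) (cfc g B ξ) := dist_triangle4 _ _ _ _
    _ < ε / 3 + ε / 3 + ε / 3 := by
        have hAi := hpoly (A i) (hA i) ((hC i).trans (le_max_left _ _))
        rw [dist_comm] at hAi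
        gcongr
        exact hpoly B hB (le_max_right _ _)
    _ = ε := add_thirds ε

theorem tendsto_cfcSqrt_apply_of_norm_le {A : ι → H →L[ℂ] H} {B : H →L[ℂ] H}
    (hA : ∀ i, 0 ≤ A i) (hB : 0 ≤ B) (hC : ∀ i, ‖A i‖ ≤ C)
    (hAB : ∀ ξ, Tendsto (fun i => A i ξ) f (𝓝 (B ξ))) (ξ : H) :
    Tendsto (fun i => CFC.sqrt (A i) ξ) f (𝓝 (CFC.sqrt B ξ)) := by
  have hsqrt : ∀ S : H →L[ℂ] H, 0 ≤ S → CFC.sqrt S = cfc Real.sqrt S := fun S hS => by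
    rw [CFC.sqrt_eq_real_sqrt S hS, cfcₙ_eq_cfc]
  rw [hsqrt B hB]
  simp only [fun i => hsqrt (A i) (hA i)]
  exact tendsto_cfc_apply_of_norm_le (fun i => (hA i).isSelfAdjoint) hB.isSelfAdjoint hC hAB
    Real.continuous_sqrt ξ

theorem tendsto_cfcAbs_apply_of_norm_le {T : ι → H →L[ℂ] H} {T₀ : H →L[ℂ] H}
    (hC : ∀ i, ‖T i‖ ≤ C) (hT : ∀ ξ, Tendsto (fun i => T i ξ) f (𝓝 (T₀ ξ)))
    (hTadj : ∀ ξ, Tendsto (fun i => ContinuousLinearMap.adjoint (T i) ξ) f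
      (𝓝 (ContinuousLinearMap.adjoint T₀ ξ))) (ξ : H) :
    Tendsto (fun i => CFC.abs (T i) ξ) f (𝓝 (CFC.abs T₀ ξ)) := by
  refine tendsto_cfcSqrt_apply_of_norm_le (C := C * C) (fun i => star_mul_self_nonneg (T i))
    (star_mul_self_nonneg T₀) (fun i => ?_) (fun η => ?_) ξ
  · rw [CStarRing.norm_star_mul_self]
    exact mul_self_le_mul_self (norm_nonneg _) (hC i)
  · refine tendsto_clm_apply_of_norm_le (C := C) (fun i => ?_) hTadj (hT η)
    exact (LinearIsometryEquiv.norm_map _ (T i)).trans_le (hC i)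

end Hilbert

theorem star_resolution_Phi_properties_general
    {ι H : Type*} [Preorder ι] [TopologicalSpace ι]
    [NormedAddCommGroup H] [InnerProductSpace ℂ H] [CompleteSpace H] {X : ι → H →L[ℂ] H}
    (hbdd : BddAbove (Set.range fun l => ‖X l‖))
    (hmul : ∀ l m, l < m → X l * X m = X l)
    (hbot : ∀ ξ, Tendsto (fun l => X l ξ) atBot (𝓝 0))
    (htop : ∀ ξ, Tendsto (fun l => X l ξ) atTop (𝓝 ξ))
    (hrc : ∀ l ξ, Tendsto (fun m => X m ξ) (𝓝[>] l) (𝓝 (X l ξ)))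
    (htopS : ∀ ξ, Tendsto (fun l => ContinuousLinearMap.adjoint (X l) ξ) atTop (𝓝 ξ))
    (hrcS : ∀ l ξ, Tendsto (fun m => ContinuousLinearMap.adjoint (X m) ξ) (𝓝[>] l)
      (𝓝 (ContinuousLinearMap.adjoint (X l) ξ))) :
    (⨆ l, ‖CFC.abs (X l)‖) = (⨆ l, ‖X l‖) ∧
    (∀ l m, l < m → CFC.abs (X l) ≤ (⨆ k, ‖X k‖) • CFC.abs (X m)) ∧
    (∀ ξ, Tendsto (fun l => CFC.abs (X l) ξ) atBot (𝓝 0)) ∧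
    (∀ ξ, Tendsto (fun l => CFC.abs (X l) ξ) atTop (𝓝 ξ)) ∧
    (∀ l ξ, Tendsto (fun m => CFC.abs (X m) ξ) (𝓝[>] l) (𝓝 (CFC.abs (X l) ξ))) := by
  have hX : ∀ l, ‖X l‖ ≤ ⨆ k, ‖X k‖ := le_ciSup hbdd
  refine ⟨by simp only [CFC.norm_abs], fun l m hlm => ?_, fun ξ => ?_, fun ξ => ?_, fun l ξ => ?_⟩
  · calc CFC.abs (X l) = CFC.abs (X l * X m) := by rw [hmul l m hlm]
      _ ≤ ‖X l‖ • CFC.abs (X m) := cfcAbs_mul_le_norm_smul_cfcAbs _ _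
      _ ≤ (⨆ k, ‖X k‖) • CFC.abs (X m) :=
          smul_le_smul_of_nonneg_right (hX l) (CFC.abs_nonneg _)
  · rw [tendsto_zero_iff_norm_tendsto_zero]
    simpa only [norm_cfcAbs_apply] using tendsto_zero_iff_norm_tendsto_zero.1 (hbot ξ)
  · have hone : ∀ η, Tendsto (fun l => ContinuousLinearMap.adjoint (X l) η) atTop
        (𝓝 (ContinuousLinearMap.adjoint (1 : H →L[ℂ] H) η)) := fun η => by
      simpa only [← ContinuousLinearMap.star_eq_adjoint, star_one, one_apply_eq_self]
        using htopS η
    simpa only [CFC.abs_one, one_apply_eq_self]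
      using tendsto_cfcAbs_apply_of_norm_le (T₀ := 1) hX htop hone ξ
  · exact tendsto_cfcAbs_apply_of_norm_le hX (hrc l) (hrcS l) ξ

/-- For a *-resolution of the identity with `sup‖X(λ)‖ = 1`, the family
`Φ(λ) = (X(λ)*X(λ))^{1/2}` satisfies: `sup_λ ‖Φ(λ)‖ = 1`, `Φ(λ) ≤ Φ(μ)` for `λ < μ`,
`Φ(λ)ξ → 0` strongly as `λ → −∞`, `Φ(λ)ξ → ξ` strongly as `λ → +∞`, and `Φ` is strongly
right-continuous.  (The square root `Φ(λ)` is characterized as the unique positive operator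
with `Φ(λ)² = F(λ)`.) -/
theorem star_resolution_Phi_properties
    {H : Type*} [NormedAddCommGroup H] [InnerProductSpace ℂ H] [CompleteSpace H]
    (X : ℝ → H →L[ℂ] H)
    (hnorm : (⨆ l : ℝ, ‖X l‖) = 1)
    (hmul : ∀ l m : ℝ, l < m → (X l).comp (X m) = X l ∧ (X m).comp (X l) = X l)
    (hbot : ∀ ξ : H, Tendsto (fun l => X l ξ) atBot (𝓝 0))
    (htop : ∀ ξ : H, Tendsto (fun l => X l ξ) atTop (𝓝 ξ))
    (hrc : ∀ (l : ℝ) (ξ : H), Tendsto (fun m => X m ξ) (𝓝[>] l) (𝓝 (X l ξ)))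
    (hbotS : ∀ ξ : H, Tendsto (fun l => ContinuousLinearMap.adjoint (X l) ξ) atBot (𝓝 0))
    (htopS : ∀ ξ : H, Tendsto (fun l => ContinuousLinearMap.adjoint (X l) ξ) atTop (𝓝 ξ))
    (hrcS : ∀ (l : ℝ) (ξ : H), Tendsto (fun m => ContinuousLinearMap.adjoint (X m) ξ)
      (𝓝[>] l) (𝓝 (ContinuousLinearMap.adjoint (X l) ξ)))
    (F : ℝ → H →L[ℂ] H)
    (hF : ∀ l, F l = (ContinuousLinearMap.adjoint (X l)).comp (X l))
    (Phi : ℝ → H →L[ℂ] H)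
    (hPhipos : ∀ l, (Phi l).IsPositive)
    (hPhisq : ∀ l, (Phi l).comp (Phi l) = F l) :
    (⨆ l : ℝ, ‖Phi l‖) = 1 ∧
    (∀ l m : ℝ, l < m → (Phi m - Phi l).IsPositive) ∧
    (∀ ξ : H, Tendsto (fun l => Phi l ξ) atBot (𝓝 0)) ∧
    (∀ ξ : H, Tendsto (fun l => Phi l ξ) atTop (𝓝 ξ)) ∧
    (∀ (l : ℝ) (ξ : H), Tendsto (fun m => Phi m ξ) (𝓝[>] l) (𝓝 (Phi l ξ))) := by
  have hbdd : BddAbove (Set.range fun l => ‖X l‖) := by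
    -- An unbounded family would have the junk supremum `0`.
    by_contra hunbdd
    exact zero_ne_one ((Real.iSup_of_not_bddAbove hunbdd).symm.trans hnorm)
  obtain rfl : Phi = fun l => CFC.abs (X l) := funext fun l =>
    have hPhi_nonneg : 0 ≤ Phi l := (Phi l).nonneg_iff_isPositive.2 (hPhipos l)
    (CFC.sqrt_unique ((hPhisq l).trans (hF l)) hPhi_nonneg).symm
  simpa only [hnorm, one_smul, ContinuousLinearMap.le_def] using
    star_resolution_Phi_properties_general hbdd (fun l m hlm => (hmul l m hlm).1)
      hbot htop hrc htopS hrcS
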